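/- arXiv:2301.02632 — 3 statements merged into one kernel-verified Lean document; each statement's English description precedes it below -/
import Mathlib

section
/- Let φ : ℝ⁵ → ℝ⁵ be the linear map determined by φe₁ = −e₂, φe₂ = −e₁, φe₃ = −e₄, φe₄ = −e₃, φe₅ = 0, let ζ = e₅, and for x ∈ H let g_x(u,w) = e^{−2x₅}(u₁w₁ + u₂w₂ + u₃w₃ + u₄w₄) − u₅w₅ and ν_x(u) = g_x(u,ζ). Then for every x ∈ H and all u, w ∈ ℝ⁵: (i) ν_x(ζ) + 1 = 0; (ii) φ(φu) = u + ν_x(u)ζ; (iii) φζ = 0 and ν_x(φu) = 0; (iv) g_x(φu, φw) = g_x(u,w) + ν_x(u)ν_x(w); (v) g_x(u,ζ) = ν_x(u) and g_x(u, φw) = g_x(φu, w). In particular (φ, ζ, ν, g) is a Lorentzian almost paracontact metric structure on H. -/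
/-!
In coordinates `φ` sends `(u₁, u₂, u₃, u₄, u₅)` to `(-u₂, -u₁, -u₄, -u₃, 0)`
(`phi_apply_of_basis`), and `ν_x(u) = -u₅` for every `x` (`nuf_eq`). With these two formulas each
identity of the structure is a polynomial identity in the coordinates of `u` and `w`, with the
conformal factor `e^{-2x₅}` treated as an indeterminate.
-/

noncomputable section

open Real

/-- ℝ⁵ as the space of functions `Fin 5 → ℝ` (coordinates `x 0, …, x 4`). -/
abbrev V5 := Fin 5 → ℝ

/-- The open half-space `H = {x ∈ ℝ⁵ : x₅ > 0}`. -/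
def H5 : Set V5 := {x | 0 < x 4}

/-- The standard basis vector `eᵢ` of ℝ⁵. -/
def ee (i : Fin 5) : V5 := fun j => if j = i then 1 else 0

/-- The frame fields: `ϱᵢ(x) = e^{x₅} eᵢ` for `1 ≤ i ≤ 4`, `ϱ₅(x) = e₅`. -/
def vr (i : Fin 5) : V5 → V5 := fun x =>
  if i.val < 4 then Real.exp (x 4) • ee i else ee i

/-- Lie bracket of vector fields: `[X,Y](x) = DY(x)(X(x)) − DX(x)(Y(x))`. -/
def bracket (X Y : V5 → V5) : V5 → V5 := fun x =>
  fderiv ℝ Y x (X x) - fderiv ℝ X x (Y x)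

/-- The Lorentzian metric `g_x(u,w) = e^{−2x₅}(u₁w₁+u₂w₂+u₃w₃+u₄w₄) − u₅w₅`. -/
def gmet (x u w : V5) : ℝ :=
  Real.exp (-2 * x 4) * (u 0 * w 0 + u 1 * w 1 + u 2 * w 2 + u 3 * w 3) - u 4 * w 4

/-- The 1-form `ν_x(u) = g_x(u, ζ)` with `ζ = e₅`. -/
def nuf (x u : V5) : ℝ := gmet x u (ee 4)

theorem nuf_eq (x u : V5) : nuf x u = -u 4 := by
  simp [nuf, gmet, ee]

/-- The coordinate formula for the linear map `φ` prescribed on the standard basis. -/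
theorem phi_apply_of_basis (φ : V5 →ₗ[ℝ] V5)
    (h1 : φ (ee 0) = -(ee 1)) (h2 : φ (ee 1) = -(ee 0))
    (h3 : φ (ee 2) = -(ee 3)) (h4 : φ (ee 3) = -(ee 2)) (h5 : φ (ee 4) = 0) (u : V5) :
    φ u = ![-u 1, -u 0, -u 3, -u 2, 0] := by
  have hu : u = u 0 • ee 0 + u 1 • ee 1 + u 2 • ee 2 + u 3 • ee 3 + u 4 • ee 4 := by
    ext i
    fin_cases i <;> simp [ee]
  -- Only the argument of `φ` is expanded; the coordinates on the right stay as they are.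
  conv_lhs => rw [hu]
  simp only [map_add, map_smul, h1, h2, h3, h4, h5]
  ext i
  fin_cases i <;> simp [ee]

/-- Let `φ` be the linear map on ℝ⁵ determined by `φe₁ = −e₂`, `φe₂ = −e₁`,
`φe₃ = −e₄`, `φe₄ = −e₃`, `φe₅ = 0`, let `ζ = e₅`, and `ν_x(u) = g_x(u,ζ)`. Then `(φ, ζ, ν, g)`
is a Lorentzian almost paracontact metric structure on `H`: for every `x ∈ H` and `u, w ∈ ℝ⁵`,
(i) `ν_x(ζ) + 1 = 0`; (ii) `φ²u = u + ν_x(u)ζ`; (iii) `φζ = 0` and `ν_x(φu) = 0`;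
(iv) `g_x(φu, φw) = g_x(u,w) + ν_x(u)ν_x(w)`; (v) `g_x(u,ζ) = ν_x(u)` and
`g_x(u, φw) = g_x(φu, w)`. -/
theorem statement1 (φ : V5 →ₗ[ℝ] V5)
    (h1 : φ (ee 0) = -(ee 1)) (h2 : φ (ee 1) = -(ee 0))
    (h3 : φ (ee 2) = -(ee 3)) (h4 : φ (ee 3) = -(ee 2)) (h5 : φ (ee 4) = 0) :
    ∀ x ∈ H5, ∀ u w : V5,
      (nuf x (ee 4) + 1 = 0) ∧
      (φ (φ u) = u + nuf x u • ee 4) ∧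
      (φ (ee 4) = 0 ∧ nuf x (φ u) = 0) ∧
      (gmet x (φ u) (φ w) = gmet x u w + nuf x u * nuf x w) ∧
      (gmet x u (ee 4) = nuf x u ∧ gmet x u (φ w) = gmet x (φ u) w) := by
  intro x _ u w
  have hφ := phi_apply_of_basis φ h1 h2 h3 h4 h5
  refine ⟨?_, ?_, ⟨h5, ?_⟩, ?_, rfl, ?_⟩
  · simp [nuf_eq, ee]
  · rw [hφ (φ u), hφ u, nuf_eq]
    ext i
    fin_cases i <;> simp [ee]
  · simp [nuf_eq, hφ u]
  · simp [nuf_eq, hφ u, hφ w, gmet]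
    ring
  · simp [hφ u, hφ w, gmet]
    ring
end
end

section
/- With ϱᵢ(x) = e^{x₅} eᵢ for 1 ≤ i ≤ 4, ϱ₅(x) = e₅, and R the curvature R(X,Y)Z = ∇_X(∇_Y Z) − ∇_Y(∇_X Z) − ∇_{[X,Y]}Z of the Levi-Civita connection ∇ of g on H, the following frame components hold at every point of H: R(ϱᵢ,ϱⱼ)ϱⱼ = ϱᵢ and R(ϱᵢ,ϱⱼ)ϱᵢ = −ϱⱼ for 1 ≤ i < j ≤ 4; R(ϱᵢ,ϱ₅)ϱ₅ = −ϱᵢ and R(ϱᵢ,ϱ₅)ϱᵢ = −ϱ₅ for 1 ≤ i ≤ 4. -/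
/-!
The frame is explicit enough that all its covariant derivatives are again frame fields, up to sign.
Differentiating `e^{x₅} eᵢ` in direction `u` gives `u₅ • ϱᵢ`, and `e^{-2x₅}` in the Christoffel term
cancels the two factors `e^{x₅}`; hence, for `i, j ≤ 4`,
`∇_{ϱᵢ} ϱⱼ = -δᵢⱼ ϱ₅`, `∇_{ϱᵢ} ϱ₅ = -ϱᵢ`, `∇_{ϱ₅} ϱᵢ = 0`, `∇_{ϱ₅} ϱ₅ = 0`,
and the brackets are `[ϱᵢ, ϱⱼ] = 0`, `[ϱᵢ, ϱ₅] = -ϱᵢ`.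
These are identities of vector fields on all of ℝ⁵, so they can be substituted into the iterated
covariant derivatives of the curvature, and the four components follow by sign bookkeeping. In the code the indices start at `0`, so that `ϱ₅` is
`vr 4`.
-/

noncomputable section

open Real

/-- The Christoffel term `Γ_x(u,w)`. -/
def Gam (x u w : V5) : V5 := fun k =>
  if k.val < 4 then -(u k * w 4 + u 4 * w k)
  else -(Real.exp (-2 * x 4) * (u 0 * w 0 + u 1 * w 1 + u 2 * w 2 + u 3 * w 3))

/-- The connection `(∇_X Y)(x) = DY(x)(X(x)) + Γ_x(X(x), Y(x))`. -/
def cov (X Y : V5 → V5) : V5 → V5 := fun x =>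
  fderiv ℝ Y x (X x) + Gam x (X x) (Y x)

/-- Curvature `R(X,Y)Z = ∇_X(∇_Y Z) − ∇_Y(∇_X Z) − ∇_{[X,Y]}Z`. -/
def curv (X Y Z : V5 → V5) : V5 → V5 := fun x =>
  cov X (cov Y Z) x - cov Y (cov X Z) x - cov (bracket X Y) Z x

lemma fderiv_vr_of_lt {i : Fin 5} (hi : i.val < 4) (x u : V5) :
    fderiv ℝ (vr i) x u = u 4 • vr i x := by
  have hv : vr i = fun y : V5 => Real.exp (y 4) • ee i := by
    funext y
    simp [vr, hi]
  have hd : HasFDerivAt (fun y : V5 => y 4)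
      (ContinuousLinearMap.proj (R := ℝ) (φ := fun _ : Fin 5 => ℝ) 4) x :=
    (ContinuousLinearMap.proj (R := ℝ) (φ := fun _ : Fin 5 => ℝ) 4).hasFDerivAt
  rw [hv, (hd.exp.smul_const (ee i)).fderiv]
  simp [smul_smul, mul_comm]

lemma fderiv_vr_four (x u : V5) : fderiv ℝ (vr 4) x u = 0 := by
  have hv : vr 4 = fun _ : V5 => ee 4 := by
    funext y
    simp [vr]
  simp [hv]

lemma vr_apply_four {i : Fin 5} (hi : i.val < 4) (x : V5) : vr i x 4 = 0 := by
  have : (4 : Fin 5) ≠ i := by rintro rfl; simp at hi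
  simp [vr, hi, ee, this]

lemma vr_four (x : V5) : vr 4 x = ee 4 := by simp [vr]

lemma cov_zero_left (Z : V5 → V5) : cov 0 Z = 0 := by
  funext x k
  simp [cov, Gam]

lemma cov_zero_right (X : V5 → V5) : cov X 0 = 0 := by
  funext x k
  simp [cov, Gam]

lemma cov_neg_left (X Z : V5 → V5) : cov (-X) Z = -cov X Z := by
  funext x k
  simp only [cov, Gam, Pi.neg_apply, Pi.add_apply, map_neg]
  split_ifs <;> ring

/-- No differentiability of `Z` is needed: `fderiv` commutes with negation unconditionally. -/
lemma cov_neg_right (X Z : V5 → V5) : cov X (-Z) = -cov X Z := by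
  funext x k
  simp only [cov, Gam, fderiv_neg, neg_apply, Pi.neg_apply, Pi.add_apply]
  split_ifs <;> ring

lemma cov_self {i : Fin 5} (hi : i.val < 4) : cov (vr i) (vr i) = -vr 4 := by
  funext x k
  have he : Real.exp (-2 * x 4) * (Real.exp (x 4) * Real.exp (x 4)) = 1 := by
    rw [← Real.exp_add, ← Real.exp_add, Real.exp_eq_one_iff]
    ring
  simp only [cov, fderiv_vr_of_lt hi, vr_apply_four hi]
  fin_cases i <;> fin_cases k <;> simp [Gam, vr, ee] at hi he ⊢ <;> exact he

lemma cov_of_ne {i j : Fin 5} (hi : i.val < 4) (hj : j.val < 4) (hij : i ≠ j) :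
    cov (vr i) (vr j) = 0 := by
  funext x k
  simp only [cov, fderiv_vr_of_lt hj, vr_apply_four hi]
  have h4 : ∀ l, vr i x l * vr j x l = 0 := by
    intro l
    by_cases hl : l = i
    · have : l ≠ j := hl ▸ hij
      simp [vr, hj, ee, this]
    · simp [vr, hi, ee, hl]
  simp [Gam, vr_apply_four hi, vr_apply_four hj, h4]

lemma cov_four_right {i : Fin 5} (hi : i.val < 4) : cov (vr i) (vr 4) = -vr i := by
  funext x k
  simp only [cov, fderiv_vr_four]
  fin_cases k <;> simp [Gam, vr_apply_four hi, vr_four, ee]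

lemma cov_four_left {i : Fin 5} (hi : i.val < 4) : cov (vr 4) (vr i) = 0 := by
  funext x k
  simp only [cov, fderiv_vr_of_lt hi]
  fin_cases k <;> simp [Gam, vr_apply_four hi, vr_four, ee]

lemma cov_four_four : cov (vr 4) (vr 4) = 0 := by
  funext x k
  simp only [cov, fderiv_vr_four]
  fin_cases k <;> simp [Gam, vr_four, ee]

lemma bracket_of_lt {i j : Fin 5} (hi : i.val < 4) (hj : j.val < 4) :
    bracket (vr i) (vr j) = 0 := by
  funext x
  simp [bracket, fderiv_vr_of_lt hi, fderiv_vr_of_lt hj, vr_apply_four hi, vr_apply_four hj]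

lemma bracket_four {i : Fin 5} (hi : i.val < 4) : bracket (vr i) (vr 4) = -vr i := by
  funext x
  simp [bracket, fderiv_vr_of_lt hi, fderiv_vr_four, vr_four, ee]

/-- Frame components of the curvature tensor at every point of `H`:
`R(ϱᵢ,ϱⱼ)ϱⱼ = ϱᵢ` and `R(ϱᵢ,ϱⱼ)ϱᵢ = −ϱⱼ` for `1 ≤ i < j ≤ 4`;
`R(ϱᵢ,ϱ₅)ϱ₅ = −ϱᵢ` and `R(ϱᵢ,ϱ₅)ϱᵢ = −ϱ₅` for `1 ≤ i ≤ 4`. -/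
theorem statement8 :
    ∀ x ∈ H5,
      (∀ i j : Fin 5, i < j → j.val < 4 →
        curv (vr i) (vr j) (vr j) x = vr i x ∧
        curv (vr i) (vr j) (vr i) x = -(vr j x)) ∧
      (∀ i : Fin 5, i.val < 4 →
        curv (vr i) (vr 4) (vr 4) x = -(vr i x) ∧
        curv (vr i) (vr 4) (vr i) x = -(vr 4 x)) := by
  intro x _
  refine ⟨fun i j hij hj => ?_, fun i hi => ?_⟩
  · have hi : i.val < 4 := lt_trans hij hj
    constructor
    · simp [curv, bracket_of_lt hi hj, cov_self hj, cov_of_ne hi hj hij.ne, cov_zero_left,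
        cov_zero_right, cov_neg_right, cov_four_right hi]
    · simp [curv, bracket_of_lt hi hj, cov_self hi, cov_of_ne hj hi hij.ne', cov_zero_left,
        cov_zero_right, cov_neg_right, cov_four_right hj]
  · constructor
    · simp [curv, bracket_four hi, cov_four_four, cov_four_right hi, cov_four_left hi,
        cov_zero_right, cov_neg_left, cov_neg_right]
    · simp [curv, bracket_four hi, cov_four_four, cov_self hi, cov_four_left hi,
        cov_zero_right, cov_neg_left, cov_neg_right]
end
end

section
/- Let v : ℝ⁵ → ℝ be twice continuously differentiable on H = {x ∈ ℝ⁵ : x₅ > 0}, let σ, ρ, Λ ∈ ℝ, and set c = Λ + 4σ − 10ρ. Suppose that on all of H the following PDE system holds (∂ᵢ denoting the partial derivative in the i-th coordinate): e^{2x₅} ∂ᵢ∂ᵢ v − ∂₅ v = −c for each i ∈ {1,2,3,4}; ∂₅∂₅ v = −c; ∂ᵢ∂ⱼ v = 0 for all 1 ≤ i ≠ j ≤ 4; and e^{x₅} ∂₅∂ᵢ v + ∂ᵢ v = 0 for each i ∈ {1,2,3,4}. Then v is constant on H and c = 0, i.e. Λ = 10ρ − 4σ. -/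
/-!
Write `t = x₅`. On each vertical half-line the last equation is the linear ODE
`∂ₜ(∂ᵢv) = -e^{-t} ∂ᵢv`, so `∂ᵢv · exp(-e^{-t})` does not depend on `t`
(`pd_mul_exp_eq`); differentiating in `xᵢ`, neither does `∂ᵢ∂ᵢv · exp(-e^{-t})`
(`pd2_mul_exp_eq`). Also `∂₅v - c + c t` does not depend on `t`. With constants `A`, `B` on the
half-line, the equation for `∂ᵢ∂ᵢv` becomes
`A · exp(e^{-t}) = e^{-2t} (B - c t)` for all `t > 0`. Letting `t → ∞` gives `A = 0`, and then
the affine function `B - c t` vanishes identically, so `c = 0` and `∂₅v = 0` on all of `H`.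
By symmetry of second derivatives `∂₅∂ᵢv = ∂ᵢ∂₅v = 0`, so the last equation gives `∂ᵢv = 0`.
Hence `Dv = 0` on the convex set `H`, and `v` is constant.
-/

noncomputable section

open Real

/-- The partial derivative `∂ᵢ v (x) = Dv(x)(eᵢ)`. -/
def pd (v : V5 → ℝ) (i : Fin 5) (x : V5) : ℝ := fderiv ℝ v x (ee i)

/-- The second partial derivative `∂ᵢ∂ⱼ v (x)`. -/
def pd2 (v : V5 → ℝ) (i j : Fin 5) (x : V5) : ℝ := fderiv ℝ (pd v j) x (ee i)

open Filter Topology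

lemma ee_eq_single (i : Fin 5) : ee i = Pi.single i 1 := by
  ext j
  simp [ee, Pi.single_apply]

lemma isOpen_H5 : IsOpen H5 :=
  isOpen_lt continuous_const (continuous_apply 4)

lemma convex_H5 : Convex ℝ H5 := by
  intro x hx y hy a b ha hb hab
  simp only [H5, Set.mem_ofPred_eq, Pi.add_apply, Pi.smul_apply, smul_eq_mul] at *
  rcases ha.eq_or_lt with rfl | ha
  · have : b = 1 := by linarith
    subst this
    linarith
  · have := mul_pos ha hx
    have := mul_nonneg hb hy.le
    linarith

lemma update_mem_H5 (x : V5) {t : ℝ} (ht : 0 < t) : Function.update x 4 t ∈ H5 := by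
  simpa [H5] using ht

lemma differentiableAt_fderiv {v : V5 → ℝ} (hv : ContDiffOn ℝ 2 v H5) {x : V5} (hx : x ∈ H5) :
    DifferentiableAt ℝ (fderiv ℝ v) x :=
  ((hv.contDiffAt (isOpen_H5.mem_nhds hx)).fderiv_right (m := 1) (by norm_num)).differentiableAt
    (by norm_num)

lemma differentiableAt_pd {v : V5 → ℝ} (hv : ContDiffOn ℝ 2 v H5) (j : Fin 5) {x : V5}
    (hx : x ∈ H5) : DifferentiableAt ℝ (pd v j) x :=
  (differentiableAt_fderiv hv hx).clm_apply (differentiableAt_const _)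

lemma pd2_eq {v : V5 → ℝ} (hv : ContDiffOn ℝ 2 v H5) (i j : Fin 5) {x : V5} (hx : x ∈ H5) :
    pd2 v i j x = fderiv ℝ (fderiv ℝ v) x (ee i) (ee j) := by
  have h := (differentiableAt_fderiv hv hx).hasFDerivAt.clm_apply
    (hasFDerivAt_const (ee j) x)
  have h' : HasFDerivAt (pd v j) _ x := h
  simp [pd2, h'.fderiv]

lemma pd2_comm {v : V5 → ℝ} (hv : ContDiffOn ℝ 2 v H5) (i j : Fin 5) {x : V5} (hx : x ∈ H5) :
    pd2 v i j x = pd2 v j i x := by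
  rw [pd2_eq hv i j hx, pd2_eq hv j i hx]
  exact ((hv.contDiffAt (isOpen_H5.mem_nhds hx)).isSymmSndFDerivAt (by simp)).eq _ _

lemma hasDerivAt_pd_update {v : V5 → ℝ} (hv : ContDiffOn ℝ 2 v H5) (j : Fin 5) (x : V5) {t : ℝ}
    (ht : 0 < t) :
    HasDerivAt (fun s => pd v j (Function.update x 4 s))
      (pd2 v 4 j (Function.update x 4 t)) t := by
  have h := (differentiableAt_pd hv j (update_mem_H5 x ht)).hasFDerivAt.comp_hasDerivAt t
    (hasDerivAt_update x 4 t)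
  rw [← ee_eq_single] at h
  exact h

lemma hasDerivAt_pd_line {v : V5 → ℝ} (hv : ContDiffOn ℝ 2 v H5) (i j : Fin 5) {x : V5}
    (hx : x ∈ H5) :
    HasDerivAt (fun s : ℝ => pd v j (x + s • ee i)) (pd2 v i j x) 0 :=
  (differentiableAt_pd hv j hx).hasFDerivAt.hasLineDerivAt (ee i)

lemma eq_of_hasDerivAt_zero {f : ℝ → ℝ} (hf : ∀ t, 0 < t → HasDerivAt f 0 t) {t : ℝ}
    (ht : 0 < t) : f t = f 1 :=
  isOpen_Ioi.is_const_of_deriv_eq_zero (convex_Ioi (0 : ℝ)).isPreconnected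
    (fun s hs => (hf s hs).differentiableAt.differentiableWithinAt)
    (fun s hs => (hf s hs).deriv) ht (Set.mem_Ioi.2 one_pos)

/-- `exp (-e^{-t})` is an integrating factor for the ODE `e^t p' + p = 0`. -/
lemma pd_mul_exp_eq {v : V5 → ℝ} (hv : ContDiffOn ℝ 2 v H5) {i : Fin 5}
    (h4 : ∀ x ∈ H5, exp (x 4) * pd2 v 4 i x + pd v i x = 0) (x : V5) {t : ℝ} (ht : 0 < t) :
    pd v i (Function.update x 4 t) * exp (-exp (-t)) =
      pd v i (Function.update x 4 1) * exp (-exp (-1)) := by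
  refine eq_of_hasDerivAt_zero
    (f := fun t => pd v i (Function.update x 4 t) * exp (-exp (-t))) (fun s hs => ?_) ht
  have h := (hasDerivAt_pd_update hv i x hs).mul (((hasDerivAt_id s).neg.exp).neg.exp)
  refine h.congr_deriv ?_
  have e := h4 _ (update_mem_H5 x hs)
  simp only [Function.update_self] at e
  have e' : pd v i (Function.update x 4 s) =
      -(exp s * pd2 v 4 i (Function.update x 4 s)) := by linarith
  have e2 : exp (-s) * exp s = 1 := by rw [← exp_add]; simp
  simp only [id, Pi.neg_apply]
  rw [e']
  linear_combination (-(pd2 v 4 i (Function.update x 4 s)) * exp (-exp (-s))) * e2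

lemma pd2_mul_exp_eq {v : V5 → ℝ} (hv : ContDiffOn ℝ 2 v H5) {i : Fin 5} (hi : i ≠ 4)
    (h4 : ∀ x ∈ H5, exp (x 4) * pd2 v 4 i x + pd v i x = 0) (x : V5) {t : ℝ} (ht : 0 < t) :
    pd2 v i i (Function.update x 4 t) * exp (-exp (-t)) =
      pd2 v i i (Function.update x 4 1) * exp (-exp (-1)) := by
  have key : ∀ s r : ℝ, Function.update (x + s • ee i) 4 r = Function.update x 4 r + s • ee i := by
    intro s r
    ext k
    by_cases hk : k = 4
    · subst hk
      simp [ee, hi.symm]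
    · simp [hk]
  have ha := (hasDerivAt_pd_line hv i i (update_mem_H5 x ht)).mul_const (exp (-exp (-t)))
  have hb := (hasDerivAt_pd_line hv i i (update_mem_H5 x one_pos)).mul_const (exp (-exp (-1)))
  refine ha.unique (hb.congr_of_eventuallyEq (Eventually.of_forall fun s => ?_))
  have := pd_mul_exp_eq hv h4 (x + s • ee i) ht
  rwa [key, key] at this

/-- The hypothesis says `A = e^{-2t} (B - c t) exp (-e^{-t})`; the right side tends to `0` as
`t → ∞`, so `A = 0` and the affine factor vanishes identically. -/
lemma coeffs_eq_zero {A B c : ℝ}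
    (h : ∀ t : ℝ, 0 < t → exp (2 * t) * A = (B - c * t) * exp (-exp (-t))) :
    B = 0 ∧ c = 0 := by
  have hneg : Tendsto (fun t : ℝ => exp (-t)) atTop (𝓝 0) :=
    tendsto_exp_neg_atTop_nhds_zero
  have hte : Tendsto (fun t : ℝ => t * exp (-t)) atTop (𝓝 0) := by
    simpa using tendsto_pow_mul_exp_neg_atTop_nhds_zero 1
  have hK : Tendsto (fun t : ℝ => exp (-exp (-t))) atTop (𝓝 (exp (-0))) :=
    (continuous_exp.tendsto _).comp hneg.neg
  have hlim : Tendsto (fun t : ℝ => (B * exp (-t) - c * (t * exp (-t))) * exp (-t) *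
      exp (-exp (-t))) atTop (𝓝 ((B * 0 - c * 0) * 0 * exp (-0))) :=
    (((hneg.const_mul B).sub (hte.const_mul c)).mul hneg).mul hK
  have hA : A = 0 := by
    have hc : Tendsto (fun _ : ℝ => A) atTop (𝓝 ((B * 0 - c * 0) * 0 * exp (-0))) := by
      refine hlim.congr' ?_
      filter_upwards [eventually_gt_atTop 0] with t ht
      have e : exp (-t) * exp (-t) * exp (2 * t) = 1 := by
        rw [← exp_add, ← exp_add]
        simp only [exp_eq_one_iff]
        ring
      linear_combination (-(exp (-t) * exp (-t))) * h t ht + A * e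
    simpa using tendsto_nhds_unique tendsto_const_nhds hc
  have haff : ∀ t : ℝ, 0 < t → B - c * t = 0 := by
    intro t ht
    have := h t ht
    rw [hA, mul_zero] at this
    exact (mul_eq_zero.1 this.symm).resolve_right (exp_pos _).ne'
  have e1 := haff 1 one_pos
  have e2 := haff 2 two_pos
  constructor <;> linarith

/-- Let `v` be C² on `H`, `σ, ρ, Λ ∈ ℝ`, and `c = Λ + 4σ − 10ρ`.
If on all of `H`: `e^{2x₅} ∂ᵢ∂ᵢv − ∂₅v = −c` for `i ∈ {1,2,3,4}`; `∂₅∂₅v = −c`;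
`∂ᵢ∂ⱼv = 0` for `1 ≤ i ≠ j ≤ 4`; and `e^{x₅} ∂₅∂ᵢv + ∂ᵢv = 0` for `i ∈ {1,2,3,4}`,
then `v` is constant on `H` and `c = 0`, i.e. `Λ = 10ρ − 4σ`. -/
theorem statement10 (v : V5 → ℝ) (σ ρ Λ c : ℝ) (hc : c = Λ + 4 * σ - 10 * ρ)
    (hv : ContDiffOn ℝ 2 v H5)
    (h1 : ∀ x ∈ H5, ∀ i : Fin 5, i.val < 4 →
      Real.exp (2 * x 4) * pd2 v i i x - pd v 4 x = -c)
    (h2 : ∀ x ∈ H5, pd2 v 4 4 x = -c)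
    (h3 : ∀ x ∈ H5, ∀ i j : Fin 5, i.val < 4 → j.val < 4 → i ≠ j → pd2 v i j x = 0)
    (h4 : ∀ x ∈ H5, ∀ i : Fin 5, i.val < 4 →
      Real.exp (x 4) * pd2 v 4 i x + pd v i x = 0) :
    (∀ x ∈ H5, ∀ y ∈ H5, v x = v y) ∧ c = 0 ∧ Λ = 10 * ρ - 4 * σ := by
  have h4' : ∀ i : Fin 5, i.val < 4 → ∀ x ∈ H5, exp (x 4) * pd2 v 4 i x + pd v i x = 0 :=
    fun i hi x hx => h4 x hx i hi
  have key : ∀ x : V5, pd v 4 (Function.update x 4 1) = 0 ∧ c = 0 := by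
    intro x
    have hw : ∀ t : ℝ, 0 < t → pd v 4 (Function.update x 4 t) + c * t =
        pd v 4 (Function.update x 4 1) + c * 1 := by
      intro t ht
      refine eq_of_hasDerivAt_zero
        (f := fun t => pd v 4 (Function.update x 4 t) + c * t) (fun s hs => ?_) ht
      refine ((hasDerivAt_pd_update hv 4 x hs).add ((hasDerivAt_id s).const_mul c)).congr_deriv ?_
      rw [h2 _ (update_mem_H5 x hs)]
      ring
    refine coeffs_eq_zero
      (A := pd2 v 0 0 (Function.update x 4 1) * exp (-exp (-1))) (fun t ht => ?_)
    have e1 := h1 _ (update_mem_H5 x ht) 0 (by norm_num)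
    simp only [Function.update_self] at e1
    have e2 := pd2_mul_exp_eq hv (by decide) (h4' 0 (by norm_num)) x ht
    linear_combination (-exp (2 * t)) * e2 + exp (-exp (-t)) * e1 + exp (-exp (-t)) * hw t ht
  have hc0 : c = 0 := (key 0).2
  have hw0 : ∀ x ∈ H5, pd v 4 x = 0 := by
    intro x hx
    -- `key` gives `∂₅v = 0` at height `1` only; as `∂₅∂₅v = -c = 0`, this holds at height `x₅` too.
    have hconst := eq_of_hasDerivAt_zero (f := fun t => pd v 4 (Function.update x 4 t))
      (fun s hs => (hasDerivAt_pd_update hv 4 x hs).congr_deriv (by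
        rw [h2 _ (update_mem_H5 x hs), hc0, neg_zero])) (t := x 4) hx
    simp only [Function.update_eq_self] at hconst
    have := (key x).1
    linarith
  have hpd : ∀ x ∈ H5, ∀ i, pd v i x = 0 := by
    intro x hx i
    by_cases hi : i.val < 4
    · have hz : pd2 v i 4 x = 0 := by
        have hev : pd v 4 =ᶠ[𝓝 x] fun _ => (0 : ℝ) := by
          filter_upwards [isOpen_H5.mem_nhds hx] with y hy using hw0 y hy
        simp [pd2, hev.fderiv_eq]
      have := h4 x hx i hi
      rwa [pd2_comm hv 4 i hx, hz, mul_zero, zero_add] at this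
    · have : i = 4 := by
        ext
        have := i.isLt
        change i.val = 4
        omega
      rw [this]
      exact hw0 x hx
  have hD : ∀ x ∈ H5, fderiv ℝ v x = 0 := by
    intro x hx
    refine ContinuousLinearMap.coe_injective ((Pi.basisFun ℝ (Fin 5)).ext fun i => ?_)
    simpa [pd, ee_eq_single] using hpd x hx i
  refine ⟨fun x hx y hy => ?_, hc0, by linarith⟩
  exact isOpen_H5.is_const_of_fderiv_eq_zero convex_H5.isPreconnected
    (hv.differentiableOn (by norm_num)) hD hx hy
end
end
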